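/- arXiv:2209.06448 — 2 statements merged into one kernel-verified Lean document; each statement's English description precedes it below -/
import Mathlib

section
/- Let M be a module name, x̄ a tuple of variables of length iar(M), and ȳ a tuple of variables of length ar(M) − iar(M), and let Q be the global BRV mapping each interpretation D to {(ν1,ν2) : the concatenated tuple ν1(x̄)·ν2(ȳ) belongs to D(M) and ν1 and ν2 agree outside the set of variables in ȳ}. Then I^sem(Q) equals the set of variables occurring in x̄ and O^sem(Q) equals the set of variables occurring in ȳ. -/
/-- A binary relation on valuations (BRV). -/
abbrev BRV (V dom : Type*) := Set ((V → dom) × (V → dom))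

namespace BRV

variable {V dom : Type*}

/-- `ν1` and `ν2` agree on the set `Y` of variables. -/
def AgreeOn (ν1 ν2 : V → dom) (Y : Set V) : Prop := ∀ y ∈ Y, ν1 y = ν2 y

/-- Composition of BRVs. -/
def comp (A B : BRV V dom) : BRV V dom :=
  {p | ∃ ν3, (p.1, ν3) ∈ A ∧ (ν3, p.2) ∈ B}

/-- Left cylindrification. -/
def cyll (Z : Set V) (A : BRV V dom) : BRV V dom :=
  {p | ∃ ν1', (ν1', p.2) ∈ A ∧ AgreeOn ν1' p.1 Zᶜ}

/-- Right cylindrification. -/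
def cylr (Z : Set V) (A : BRV V dom) : BRV V dom :=
  {p | ∃ ν2', (p.1, ν2') ∈ A ∧ AgreeOn ν2' p.2 Zᶜ}

/-- Left selection. -/
def sell (x y : V) (A : BRV V dom) : BRV V dom := {p ∈ A | p.1 x = p.1 y}

/-- Right selection. -/
def selr (x y : V) (A : BRV V dom) : BRV V dom := {p ∈ A | p.2 x = p.2 y}

/-- Left-to-right selection. -/
def sellr (x y : V) (A : BRV V dom) : BRV V dom := {p ∈ A | p.1 x = p.2 y}


end BRV


/-- A global BRV: a function from interpretations to BRVs.
`I` is the type of interpretations. -/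
abbrev GBRV (V dom I : Type*) := I → BRV V dom

/-- Semantic outputs of a global BRV. -/
def Osem {V dom I : Type*} (Q : GBRV V dom I) : Set V :=
  {x | ∃ (D : I) (p : (V → dom) × (V → dom)), p ∈ Q D ∧ p.1 x ≠ p.2 x}

/-- `X` determines `Q` on `Y`. -/
def Determines {V dom I : Type*} (Q : GBRV V dom I) (X Y : Set V) : Prop :=
  ∀ (D : I), ∀ p ∈ Q D, ∀ ν1' : V → dom, BRV.AgreeOn ν1' p.1 X →
    ∃ ν2' : V → dom, BRV.AgreeOn ν2' p.2 Y ∧ (ν1', ν2') ∈ Q D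

/-- Semantic inputs of a global BRV. -/
def Isem {V dom I : Type*} (Q : GBRV V dom I) : Set V :=
  {x | ¬ Determines Q ({x}ᶜ) (Osem Q)}

-- `ν` patched with the `X`-valuation `ν'` (the values of `ν'` outside `X` are irrelevant).
open Classical in
noncomputable def patch {V dom : Type*} (ν ν' : V → dom) (X : Set V) : V → dom :=
  fun v => if v ∈ X then ν' v else ν v

/-- A global BRV is inertially cylindrified on `X`. -/
def InertCyl {V dom I : Type*} (Q : GBRV V dom I) (X : Set V) : Prop :=
  (∀ x ∈ X, x ∉ Osem Q) ∧
  ∀ (D : I), ∀ p ∈ Q D, ∀ ν' : V → dom,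
    (patch p.1 ν' X, patch p.2 ν' X) ∈ Q D

open Function

/-!
Changing the first valuation outside `x̄` keeps a pair realizable: let the second valuation retain
its values on `ȳ` and copy the new first valuation elsewhere. So the inputs occur in `x̄`, and by
inertia the outputs occur in `ȳ`. Conversely, interpreting the module by a single tuple makes every
variable of `x̄` and `ȳ` count: that tuple prescribes the value of each input, and it can be chosen
to overwrite any given output variable by a new value.
-/

theorem patch_of_mem {V dom : Type*} {ν ν' : V → dom} {X : Set V} {v : V} (hv : v ∈ X) :
    patch ν ν' X v = ν' v :=
  if_pos hv

theorem patch_of_notMem {V dom : Type*} {ν ν' : V → dom} {X : Set V} {v : V} (hv : v ∉ X) :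
    patch ν ν' X v = ν v :=
  if_neg hv

namespace BRV

variable {V dom : Type*} {ν ν' : V → dom} {X Y : Set V}

theorem AgreeOn.mono (h : AgreeOn ν ν' Y) (hXY : X ⊆ Y) : AgreeOn ν ν' X :=
  fun v hv => h v (hXY hv)

theorem agreeOn_setOf_mem_iff {l : List V} :
    AgreeOn ν ν' {v | v ∈ l} ↔ l.map ν = l.map ν' :=
  List.map_inj_left.symm

theorem agreeOn_update_left [DecidableEq V] {x : V} (hx : x ∉ X) (a : dom) :
    AgreeOn (update ν x a) ν X :=
  fun _ hv => update_of_ne (ne_of_mem_of_not_mem hv hx) a ν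

theorem agreeOn_patch_right : AgreeOn (patch ν ν' X) ν' X :=
  fun _ hv => patch_of_mem hv

theorem agreeOn_patch_left : AgreeOn ν (patch ν ν' X) Xᶜ :=
  fun _ hv => (patch_of_notMem hv).symm

end BRV

open BRV

section GBRV

variable {V dom I : Type*} {Q : GBRV V dom I} {X X' Y Y' : Set V}

theorem Determines.mono (h : Determines Q X Y) (hX : X ⊆ X') (hY : Y' ⊆ Y) :
    Determines Q X' Y' := fun D p hp ν hν =>
  let ⟨ν', hν', hQ⟩ := h D p hp ν (hν.mono hX)
  ⟨ν', hν'.mono hY, hQ⟩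

theorem Determines.isem_subset (h : Determines Q X (Osem Q)) : Isem Q ⊆ X := by
  intro x hx
  by_contra hxX
  exact hx (h.mono (Set.subset_compl_singleton_iff.mpr hxX) subset_rfl)

end GBRV

/-- The atomic module expression `M(x̄; ȳ)` as a global BRV, for a module `M` whose relation under
the interpretation `D` is `R D`. Tuples are lists, so `R D` may contain tuples of any length, but
only those of length `|x̄| + |ȳ|` matter. -/
def moduleAtom {V dom I : Type*} (R : I → Set (List dom)) (xs ys : List V) : GBRV V dom I :=
  fun D => {p | xs.map p.1 ++ ys.map p.2 ∈ R D ∧ AgreeOn p.1 p.2 {v | v ∈ ys}ᶜ}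

section ModuleAtom

variable {V dom I : Type*} {R : I → Set (List dom)} {xs ys : List V}

theorem osem_moduleAtom_subset : Osem (moduleAtom R xs ys) ⊆ {v | v ∈ ys} := by
  rintro y ⟨D, p, hp, hne⟩
  by_contra hy
  exact hne (hp.2 y hy)

theorem subset_osem_moduleAtom [Nontrivial dom]
    (hR : ∀ l : List dom, l.length = xs.length + ys.length → ∃ D, l ∈ R D) :
    {v | v ∈ ys} ⊆ Osem (moduleAtom R xs ys) := by
  classical
  intro y hy
  obtain ⟨a, b, hab⟩ := exists_pair_ne dom
  let ν : V → dom := fun _ => a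
  let ν' := update ν y b
  obtain ⟨D, hD⟩ := hR (xs.map ν' ++ ys.map ν) (by simp)
  have hne : ν' y ≠ ν y := (update_self y b ν).trans_ne hab.symm
  exact ⟨D, (ν', ν), ⟨hD, agreeOn_update_left (not_not_intro hy) b⟩, hne⟩

theorem determines_moduleAtom :
    Determines (moduleAtom R xs ys) {v | v ∈ xs} {v | v ∈ ys} := by
  intro D p hp ν hν
  refine ⟨patch ν p.2 {v | v ∈ ys}, agreeOn_patch_right, ?_, agreeOn_patch_left⟩
  simpa only [agreeOn_setOf_mem_iff.mp hν, agreeOn_setOf_mem_iff.mp agreeOn_patch_right] using hp.1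

theorem Determines.subset_of_moduleAtom [Nontrivial dom]
    (hR : ∀ l : List dom, l.length = xs.length + ys.length → ∃ D, R D = {l})
    {X Y : Set V} (h : Determines (moduleAtom R xs ys) X Y) : {v | v ∈ xs} ⊆ X := by
  classical
  intro x hx
  by_contra hxX
  obtain ⟨a, b, hab⟩ := exists_pair_ne dom
  let ν : V → dom := fun _ => a
  obtain ⟨D, hD⟩ := hR (xs.map ν ++ ys.map ν) (by simp)
  have hν : (ν, ν) ∈ moduleAtom R xs ys D := ⟨hD ▸ rfl, fun _ _ => rfl⟩
  obtain ⟨ν', -, hmem, -⟩ := h D (ν, ν) hν (update ν x b) (agreeOn_update_left hxX b)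
  have htuple : xs.map (update ν x b) ++ ys.map ν' = xs.map ν ++ ys.map ν :=
    Set.mem_singleton_iff.mp (hD ▸ hmem)
  have hinput : xs.map (update ν x b) = xs.map ν := List.append_inj_left htuple (by simp)
  have hba : b = a := (update_self x b ν).symm.trans (agreeOn_setOf_mem_iff.mpr hinput x hx)
  exact hab hba.symm

theorem isem_moduleAtom_subset : Isem (moduleAtom R xs ys) ⊆ {v | v ∈ xs} :=
  (determines_moduleAtom.mono subset_rfl osem_moduleAtom_subset).isem_subset

theorem subset_isem_moduleAtom [Nontrivial dom]
    (hR : ∀ l : List dom, l.length = xs.length + ys.length → ∃ D, R D = {l}) :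
    {v | v ∈ xs} ⊆ Isem (moduleAtom R xs ys) :=
  fun x hx hdet => hdet.subset_of_moduleAtom hR hx (Set.mem_singleton x)

end ModuleAtom

-- `hR` holds when all sets of lists are admitted as interpretations, and also when `R D` is
-- required to be a relation of arity `|x̄| + |ȳ|`.
theorem stmt5_general {V dom I : Type*} [Nontrivial dom] {R : I → Set (List dom)} {xs ys : List V}
    (hR : ∀ l : List dom, l.length = xs.length + ys.length → ∃ D, R D = {l}) :
    Isem (moduleAtom R xs ys) = {v | v ∈ xs} ∧ Osem (moduleAtom R xs ys) = {v | v ∈ ys} := by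
  have hmem (l : List dom) (hl : l.length = xs.length + ys.length) : ∃ D, l ∈ R D := by
    obtain ⟨D, hD⟩ := hR l hl
    exact ⟨D, hD.symm ▸ Set.mem_singleton l⟩
  exact ⟨isem_moduleAtom_subset.antisymm (subset_isem_moduleAtom hR),
    osem_moduleAtom_subset.antisymm (subset_osem_moduleAtom hmem)⟩

theorem stmt5 (Name V dom : Type*) [Nonempty Name] [Countable dom] [Infinite dom]
    (ar iar : Name → ℕ) (hle : ∀ M, iar M ≤ ar M)
    (M : Name) (xs ys : List V)
    (hx : xs.length = iar M) (hy : ys.length = ar M - iar M)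
    (Q : GBRV V dom (Name → Set (List dom)))
    (hQ : ∀ D, Q D = {p | (xs.map p.1 ++ ys.map p.2) ∈ D M ∧
                          BRV.AgreeOn p.1 p.2 {v | v ∈ ys}ᶜ}) :
    Isem Q = {v | v ∈ xs} ∧ Osem Q = {v | v ∈ ys} := by
  obtain rfl : Q = moduleAtom (fun D => D M) xs ys := funext hQ
  exact stmt5_general fun l _ => ⟨fun _ => {l}, rfl⟩
end

section
/- (Soundness Theorem) The pair (I^syn, O^syn) is a sound input–output definition; that is: for every atomic module expression α = M(x̄;ȳ), I^syn(α) is the set of variables in x̄ and O^syn(α) is the set of variables in ȳ; for every LIF expression α, O^syn(α) ⊇ O^sem(α); and for every LIF expression α, I^syn(α) determines the global BRV of α on O^syn(α). -/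
/-- A module vocabulary: each module name has an arity and an input arity. -/
structure Vocab (Name : Type*) where
  ar : Name → ℕ
  iar : Name → ℕ
  iar_le : ∀ M, iar M ≤ ar M

/-- LIF expressions over a module vocabulary. -/
inductive LIF (Name V : Type*) (voc : Vocab Name) : Type _ where
  | idE : LIF Name V voc
  | atom (M : Name) (xs ys : List V)
      (hx : xs.length = voc.iar M) (hy : ys.length = voc.ar M - voc.iar M) :
      LIF Name V voc
  | union (a b : LIF Name V voc) : LIF Name V voc
  | inter (a b : LIF Name V voc) : LIF Name V voc
  | diff  (a b : LIF Name V voc) : LIF Name V voc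
  | comp  (a b : LIF Name V voc) : LIF Name V voc
  | cyll (Z : Finset V) (a : LIF Name V voc) : LIF Name V voc
  | cylr (Z : Finset V) (a : LIF Name V voc) : LIF Name V voc
  | sellr (x y : V) (a : LIF Name V voc) : LIF Name V voc
  | sell (x y : V) (a : LIF Name V voc) : LIF Name V voc
  | selr (x y : V) (a : LIF Name V voc) : LIF Name V voc

/-- An interpretation assigns to each module name a relation over `dom`,
represented as a set of lists. -/
abbrev Interp (Name dom : Type*) := Name → Set (List dom)

namespace LIF

variable {Name V dom : Type*} {voc : Vocab Name}

/-- The semantics of a LIF expression under an interpretation. -/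
def sem (D : Interp Name dom) : LIF Name V voc → BRV V dom
  | .idE => {p | p.1 = p.2}
  | .atom M xs ys _ _ =>
      {p | (xs.map p.1 ++ ys.map p.2) ∈ D M ∧ BRV.AgreeOn p.1 p.2 {v | v ∈ ys}ᶜ}
  | .union a b => a.sem D ∪ b.sem D
  | .inter a b => a.sem D ∩ b.sem D
  | .diff a b  => a.sem D \ b.sem D
  | .comp a b  => BRV.comp (a.sem D) (b.sem D)
  | .cyll Z a  => BRV.cyll (↑Z) (a.sem D)
  | .cylr Z a  => BRV.cylr (↑Z) (a.sem D)
  | .sellr x y a => BRV.sellr x y (a.sem D)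
  | .sell x y a  => BRV.sell x y (a.sem D)
  | .selr x y a  => BRV.selr x y (a.sem D)

/-- The global BRV induced by a LIF expression. -/
def gsem (dom : Type*) (α : LIF Name V voc) : GBRV V dom (Interp Name dom) :=
  fun D => α.sem D

end LIF

namespace LIF

variable {Name V : Type*} {voc : Vocab Name} [DecidableEq V]

/-- Syntactic outputs of a LIF expression. -/
def Osyn : LIF Name V voc → Finset V
  | .idE => ∅
  | .atom _ _ ys _ _ => ys.toFinset
  | .union a b => a.Osyn ∪ b.Osyn
  | .inter a b => a.Osyn ∩ b.Osyn
  | .diff a _  => a.Osyn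
  | .comp a b  => a.Osyn ∪ b.Osyn
  | .cyll Z a  => a.Osyn ∪ Z
  | .cylr Z a  => a.Osyn ∪ Z
  | .sellr x y a => if x = y then a.Osyn \ {x} else a.Osyn
  | .sell _ _ a  => a.Osyn
  | .selr _ _ a  => a.Osyn

/-- Syntactic inputs of a LIF expression. -/
def Isyn : LIF Name V voc → Finset V
  | .idE => ∅
  | .atom _ xs _ _ _ => xs.toFinset
  | .union a b => a.Isyn ∪ b.Isyn ∪ ((a.Osyn \ b.Osyn) ∪ (b.Osyn \ a.Osyn))
  | .inter a b => a.Isyn ∪ b.Isyn ∪ ((a.Osyn \ b.Osyn) ∪ (b.Osyn \ a.Osyn))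
  | .diff a b  => a.Isyn ∪ b.Isyn ∪ ((a.Osyn \ b.Osyn) ∪ (b.Osyn \ a.Osyn))
  | .comp a b  => a.Isyn ∪ (b.Isyn \ a.Osyn)
  | .cyll Z a  => a.Isyn \ Z
  | .cylr _ a  => a.Isyn
  | .sellr x y a =>
      if x = y then (if y ∈ a.Osyn then a.Isyn ∪ {x} else a.Isyn)
      else (if y ∈ a.Osyn then a.Isyn ∪ {x} else a.Isyn ∪ {x, y})
  | .sell x y a => if x = y then a.Isyn else a.Isyn ∪ {x, y}
  | .selr x y a => if x = y then a.Isyn else a.Isyn ∪ ({x, y} \ a.Osyn)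

end LIF

/-!
The theorem is proved by induction from one closure property per operator, with soundness of a pair
`(X, Y)` for a global BRV `Q` as the induction hypothesis. The inclusion `Osem Q ⊆ Y` is a law of
inertia: the two components of any pair of `Q` agree outside `Y`. In the presence of inertia, the
valuation promised by determinacy is unique, so whether an inertial pair lies in `Q D` depends only
on its first component on `X` and its second component on `Y`. In particular `Y` may be replaced by
any `Y'` satisfying inertia, provided that `Y ∆ Y'` is added to the inputs; this is where the
symmetric differences in the syntactic inputs of `∪`, `∩` and `∖` come from.
-/

namespace BRV.AgreeOn

variable {V dom : Type*} {ν₁ ν₂ ν₃ : V → dom} {Y Z : Set V}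

theorem symm (h : AgreeOn ν₁ ν₂ Y) : AgreeOn ν₂ ν₁ Y := fun v hv => (h v hv).symm

theorem trans (h₁ : AgreeOn ν₁ ν₂ Y) (h₂ : AgreeOn ν₂ ν₃ Y) : AgreeOn ν₁ ν₃ Y :=
  fun v hv => (h₁ v hv).trans (h₂ v hv)

theorem mono_s7 (h : AgreeOn ν₁ ν₂ Z) (hYZ : Y ⊆ Z) : AgreeOn ν₁ ν₂ Y := fun v hv => h v (hYZ hv)

theorem union (hY : AgreeOn ν₁ ν₂ Y) (hZ : AgreeOn ν₁ ν₂ Z) : AgreeOn ν₁ ν₂ (Y ∪ Z) :=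
  fun v hv => hv.elim (hY v) (hZ v)

theorem eq_of_compl (hY : AgreeOn ν₁ ν₂ Y) (hYc : AgreeOn ν₁ ν₂ Yᶜ) : ν₁ = ν₂ :=
  funext fun v => (em (v ∈ Y)).elim (hY v) (hYc v)

end BRV.AgreeOn

open BRV (AgreeOn)
open scoped symmDiff

theorem subset_union_sdiff_union {α : Type*} (A X Y : Set α) : A ⊆ X ∪ A \ Y ∪ Y := by
  rw [Set.union_assoc, Set.sdiff_union_self]
  exact Set.subset_union_left.trans Set.subset_union_right

section Patch

variable {V dom : Type*} (ν ν' : V → dom) (X : Set V)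

theorem agreeOn_patch : AgreeOn (patch ν ν' X) ν' X := fun _ hv => if_pos hv

theorem agreeOn_patch_compl : AgreeOn (patch ν ν' X) ν Xᶜ := fun _ hv => if_neg hv

end Patch

theorem BRV.sell_self {V dom : Type*} (x : V) (A : BRV V dom) : BRV.sell x x A = A :=
  Set.sep_eq_self_iff_mem_true.2 fun _ _ => rfl

theorem BRV.selr_self {V dom : Type*} (x : V) (A : BRV V dom) : BRV.selr x x A = A :=
  Set.sep_eq_self_iff_mem_true.2 fun _ _ => rfl

section Osem

variable {V dom I : Type*} {Q R : GBRV V dom I} {Y : Set V}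

theorem osem_subset_iff : Osem Q ⊆ Y ↔ ∀ D, ∀ p ∈ Q D, AgreeOn p.1 p.2 Yᶜ := by
  constructor
  · intro hQ D p hp v hv
    by_contra hne
    exact hv (hQ ⟨D, p, hp, hne⟩)
  · rintro hQ v ⟨D, p, hp, hne⟩
    by_contra hv
    exact hne (hQ D p hp v hv)

theorem agreeOn_snd (hQ : Osem Q ⊆ Y) {D : I} {p q : (V → dom) × (V → dom)}
    (hp : p ∈ Q D) (hq : q ∈ Q D) {S : Set V} (h₁ : AgreeOn q.1 p.1 S) (h₂ : AgreeOn q.2 p.2 Y) :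
    AgreeOn q.2 p.2 (S ∪ Y) := by
  intro v hv
  by_cases hvY : v ∈ Y
  · exact h₂ v hvY
  · calc q.2 v = q.1 v := (osem_subset_iff.1 hQ D q hq v hvY).symm
      _ = p.1 v := h₁ v (hv.resolve_right hvY)
      _ = p.2 v := osem_subset_iff.1 hQ D p hp v hvY

theorem osem_mono (h : ∀ D, Q D ⊆ R D) : Osem Q ⊆ Osem R :=
  fun _ ⟨D, p, hp, hne⟩ => ⟨D, p, h D hp, hne⟩

theorem osem_union_subset (Q R : GBRV V dom I) : Osem (fun D => Q D ∪ R D) ⊆ Osem Q ∪ Osem R := by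
  rintro v ⟨D, p, hp | hp, hne⟩
  · exact .inl ⟨D, p, hp, hne⟩
  · exact .inr ⟨D, p, hp, hne⟩

end Osem

/-- `(X, Y)` is a sound pair of input and output sets for the single global BRV `Q`: this is the
condition that a sound input–output definition imposes on the pair `(I(α), O(α))` for each
expression `α`. -/
structure IsSoundIO {V dom I : Type*} (Q : GBRV V dom I) (X Y : Set V) : Prop where
  osem_subset : Osem Q ⊆ Y
  determines : Determines Q X Y

namespace IsSoundIO

variable {V dom I : Type*} {Q R : GBRV V dom I} {X X' Y Y' : Set V}

theorem agreeOn_compl (h : IsSoundIO Q X Y) {D : I} {p : (V → dom) × (V → dom)} (hp : p ∈ Q D) :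
    AgreeOn p.1 p.2 Yᶜ :=
  osem_subset_iff.1 h.osem_subset D p hp

theorem mono_inputs (h : IsSoundIO Q X Y) (hX : X ⊆ X') : IsSoundIO Q X' Y :=
  ⟨h.osem_subset, fun D p hp ν₁' hν => h.determines D p hp ν₁' (hν.mono_s7 hX)⟩

theorem change_outputs (h : IsSoundIO Q X Y) (hY' : Osem Q ⊆ Y') :
    IsSoundIO Q (X ∪ Y ∆ Y') Y' := by
  refine ⟨hY', fun D p hp ν₁' hν₁ => ?_⟩
  obtain ⟨ν₂', hν₂, hq⟩ := h.determines D p hp ν₁' (hν₁.mono_s7 Set.subset_union_left)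
  refine ⟨ν₂', (agreeOn_snd h.osem_subset hp hq hν₁ hν₂).mono_s7 ?_, hq⟩
  intro v hv
  simp only [Set.mem_union, Set.mem_symmDiff]
  tauto

theorem mem_of_agreeOn (h : IsSoundIO Q X Y) {D : I} {p q : (V → dom) × (V → dom)}
    (hp : p ∈ Q D) (h₁ : AgreeOn q.1 p.1 X) (h₂ : AgreeOn q.2 p.2 Y)
    (hq : AgreeOn q.1 q.2 Yᶜ) : q ∈ Q D := by
  obtain ⟨ν₂', hν₂, hmem⟩ := h.determines D p hp q.1 h₁
  have hν₂' : ν₂' = q.2 :=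
    (hν₂.trans h₂.symm).eq_of_compl ((h.agreeOn_compl hmem).symm.trans hq)
  rwa [hν₂'] at hmem

theorem sep (h : IsSoundIO Q X Y) (hX : X ⊆ X') {P : I → (V → dom) × (V → dom) → Prop}
    (hP : ∀ D, ∀ p ∈ Q D, ∀ q ∈ Q D, AgreeOn q.1 p.1 X' → AgreeOn q.2 p.2 (X' ∪ Y) →
      P D p → P D q) :
    IsSoundIO (fun D => {p ∈ Q D | P D p}) X' Y := by
  refine ⟨(osem_mono fun D => Set.sep_subset _ _).trans h.osem_subset, ?_⟩
  rintro D p ⟨hp, hPp⟩ ν₁' hν₁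
  obtain ⟨ν₂', hν₂, hq⟩ := h.determines D p hp ν₁' (hν₁.mono_s7 hX)
  exact ⟨ν₂', hν₂, hq, hP D p hp _ hq hν₁ (agreeOn_snd h.osem_subset hp hq hν₁ hν₂) hPp⟩

theorem union_of_same_outputs (hQ : IsSoundIO Q X Y) (hR : IsSoundIO R X' Y) :
    IsSoundIO (fun D => Q D ∪ R D) (X ∪ X') Y := by
  refine ⟨(osem_union_subset Q R).trans (Set.union_subset hQ.osem_subset hR.osem_subset), ?_⟩
  rintro D p (hp | hp) ν₁' hν₁
  · obtain ⟨ν₂', hν₂, hq⟩ := hQ.determines D p hp ν₁' (hν₁.mono_s7 Set.subset_union_left)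
    exact ⟨ν₂', hν₂, .inl hq⟩
  · obtain ⟨ν₂', hν₂, hq⟩ := hR.determines D p hp ν₁' (hν₁.mono_s7 Set.subset_union_right)
    exact ⟨ν₂', hν₂, .inr hq⟩

theorem union (hQ : IsSoundIO Q X Y) (hR : IsSoundIO R X' Y') :
    IsSoundIO (fun D => Q D ∪ R D) (X ∪ X' ∪ Y ∆ Y') (Y ∪ Y') := by
  have hQ' := hQ.change_outputs (hQ.osem_subset.trans (Set.subset_union_left (t := Y')))
  have hR' := hR.change_outputs (hR.osem_subset.trans (Set.subset_union_right (s := Y)))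
  refine (hQ'.union_of_same_outputs hR').mono_inputs fun v => ?_
  simp only [Set.mem_union, Set.mem_symmDiff]
  tauto

theorem mem_of_agreeOn_symmDiff (h : IsSoundIO Q X Y) {D : I} {p q : (V → dom) × (V → dom)}
    {S : Set V} (hS : X ∪ Y' ∆ Y ⊆ S) (hp : p ∈ Q D) (h₁ : AgreeOn q.1 p.1 S)
    (h₂ : AgreeOn q.2 p.2 (S ∪ Y')) (hq : AgreeOn q.1 q.2 Y'ᶜ) : q ∈ Q D := by
  have h' := h.change_outputs (h.osem_subset.trans (Set.subset_union_right (s := Y')))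
  have hX : X ∪ Y ∆ (Y' ∪ Y) ⊆ X ∪ Y' ∆ Y := fun v => by
    simp only [Set.mem_union, Set.mem_symmDiff]
    tauto
  have hY : Y' ∪ Y ⊆ X ∪ Y' ∆ Y ∪ Y' := fun v => by
    simp only [Set.mem_union, Set.mem_symmDiff]
    tauto
  exact h'.mem_of_agreeOn hp (h₁.mono_s7 (hX.trans hS))
    (h₂.mono_s7 (hY.trans (Set.union_subset_union_left Y' hS)))
    (hq.mono_s7 (Set.compl_subset_compl.2 Set.subset_union_left))

theorem diff (hQ : IsSoundIO Q X Y) (hR : IsSoundIO R X' Y') :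
    IsSoundIO (fun D => Q D \ R D) (X ∪ X' ∪ Y ∆ Y') Y :=
  hQ.sep (fun _ hv => .inl (.inl hv)) fun _ _ hp _ _ h₁ h₂ hpR hqR =>
    hpR (hR.mem_of_agreeOn_symmDiff (Set.union_subset_union_left _ Set.subset_union_right) hqR
      h₁.symm h₂.symm (hQ.agreeOn_compl hp))

theorem inter (hQ : IsSoundIO Q X Y) (hR : IsSoundIO R X' Y') :
    IsSoundIO (fun D => Q D ∩ R D) (X ∪ X' ∪ Y ∆ Y') (Y ∩ Y') := by
  have hQR : IsSoundIO (fun D => Q D ∩ R D) (X ∪ X' ∪ Y ∆ Y') Y :=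
    hQ.sep (fun _ hv => .inl (.inl hv)) fun _ _ _ _ hq h₁ h₂ hpR =>
      hR.mem_of_agreeOn_symmDiff (Set.union_subset_union_left _ Set.subset_union_right) hpR
        h₁ h₂ (hQ.agreeOn_compl hq)
  have hO : Osem (fun D => Q D ∩ R D) ⊆ Y ∩ Y' :=
    Set.subset_inter hQR.osem_subset
      ((osem_mono fun _ => Set.inter_subset_right).trans hR.osem_subset)
  refine (hQR.change_outputs hO).mono_inputs fun v => ?_
  simp only [Set.mem_union, Set.mem_symmDiff, Set.mem_inter_iff]
  tauto

theorem comp (hQ : IsSoundIO Q X Y) (hR : IsSoundIO R X' Y') :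
    IsSoundIO (fun D => BRV.comp (Q D) (R D)) (X ∪ X' \ Y) (Y ∪ Y') := by
  refine ⟨osem_subset_iff.2 ?_, ?_⟩
  · rintro D p ⟨κ, hQκ, hRκ⟩
    rw [Set.compl_union]
    exact ((hQ.agreeOn_compl hQκ).mono_s7 Set.inter_subset_left).trans
      ((hR.agreeOn_compl hRκ).mono_s7 Set.inter_subset_right)
  · rintro D p ⟨κ, hQκ, hRκ⟩ ν₁' hν₁
    obtain ⟨κ', hκY, hQκ'⟩ := hQ.determines D _ hQκ ν₁' (hν₁.mono_s7 Set.subset_union_left)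
    have hκ : AgreeOn κ' κ (X ∪ X' \ Y ∪ Y) := agreeOn_snd hQ.osem_subset hQκ hQκ' hν₁ hκY
    obtain ⟨ν₂', hν₂, hRκ'⟩ := hR.determines D _ hRκ κ' (hκ.mono_s7 (subset_union_sdiff_union X' X Y))
    exact ⟨ν₂', agreeOn_snd hR.osem_subset hRκ hRκ' hκY hν₂, κ', hQκ', hRκ'⟩

theorem cyll (h : IsSoundIO Q X Y) (Z : Set V) :
    IsSoundIO (fun D => BRV.cyll Z (Q D)) (X \ Z) (Y ∪ Z) := by
  refine ⟨osem_subset_iff.2 ?_, ?_⟩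
  · rintro D p ⟨κ, hκ, hκZ⟩
    rw [Set.compl_union]
    exact (hκZ.symm.mono_s7 Set.inter_subset_right).trans
      ((h.agreeOn_compl hκ).mono_s7 Set.inter_subset_left)
  · rintro D p ⟨κ, hκ, hκZ⟩ ν₁' hν₁
    have hZ : AgreeOn (patch ν₁' κ Z) κ Z := agreeOn_patch ν₁' κ Z
    have hZc : AgreeOn (patch ν₁' κ Z) ν₁' Zᶜ := agreeOn_patch_compl ν₁' κ Z
    have hXZ : AgreeOn (patch ν₁' κ Z) κ (X \ Z) :=
      ((hZc.mono_s7 Set.inter_subset_right).trans hν₁).trans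
        (hκZ.symm.mono_s7 Set.inter_subset_right)
    obtain ⟨ν₂', hν₂, hq⟩ := h.determines D _ hκ (patch ν₁' κ Z)
      ((hXZ.union hZ).mono_s7 (Set.sdiff_union_self.symm ▸ Set.subset_union_left))
    have hν₂Z : AgreeOn ν₂' p.2 (Z ∪ Y) := agreeOn_snd h.osem_subset hκ hq hZ hν₂
    exact ⟨ν₂', Set.union_comm Z Y ▸ hν₂Z, patch ν₁' κ Z, hq, hZc⟩

theorem cylr (h : IsSoundIO Q X Y) (Z : Set V) :
    IsSoundIO (fun D => BRV.cylr Z (Q D)) X (Y ∪ Z) := by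
  refine ⟨osem_subset_iff.2 ?_, ?_⟩
  · rintro D p ⟨κ, hκ, hκZ⟩
    rw [Set.compl_union]
    exact ((h.agreeOn_compl hκ).mono_s7 Set.inter_subset_left).trans
      (hκZ.mono_s7 Set.inter_subset_right)
  · rintro D p ⟨κ, hκ, hκZ⟩ ν₁' hν₁
    obtain ⟨κ', hκ', hq⟩ := h.determines D _ hκ ν₁' hν₁
    have hZ : AgreeOn (patch κ' p.2 Z) p.2 Z := agreeOn_patch κ' p.2 Z
    have hZc : AgreeOn (patch κ' p.2 Z) κ' Zᶜ := agreeOn_patch_compl κ' p.2 Z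
    have hYZ : AgreeOn (patch κ' p.2 Z) p.2 (Y \ Z) :=
      ((hZc.mono_s7 Set.inter_subset_right).trans (hκ'.mono_s7 Set.inter_subset_left)).trans
        (hκZ.mono_s7 Set.inter_subset_right)
    exact ⟨patch κ' p.2 Z, Set.sdiff_union_self ▸ hYZ.union hZ, κ', hq, hZc.symm⟩

theorem sell (h : IsSoundIO Q X Y) (x y : V) :
    IsSoundIO (fun D => BRV.sell x y (Q D)) (X ∪ {x, y}) Y := by
  refine h.sep Set.subset_union_left fun D p _ q _ h₁ _ hxy => ?_
  rw [h₁ x (by simp), h₁ y (by simp), hxy]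

theorem selr (h : IsSoundIO Q X Y) (x y : V) :
    IsSoundIO (fun D => BRV.selr x y (Q D)) (X ∪ {x, y} \ Y) Y := by
  refine h.sep Set.subset_union_left fun D p _ q _ _ h₂ hxy => ?_
  have hxyY := h₂.mono_s7 (subset_union_sdiff_union {x, y} X Y)
  rw [hxyY x (by simp), hxyY y (by simp), hxy]

theorem sellr (h : IsSoundIO Q X Y) (x y : V) :
    IsSoundIO (fun D => BRV.sellr x y (Q D)) (X ∪ {x} ∪ {y} \ Y) Y := by
  refine h.sep (fun _ hv => .inl (.inl hv)) fun D p _ q _ h₁ h₂ hxy => ?_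
  rw [h₁ x (by simp), h₂ y (subset_union_sdiff_union {y} _ Y rfl), hxy]

theorem sellr_self (h : IsSoundIO Q X Y) (x : V) :
    IsSoundIO (fun D => BRV.sellr x x (Q D)) (X ∪ {x}) (Y \ {x}) := by
  have hO : Osem (fun D => BRV.sellr x x (Q D)) ⊆ Y \ {x} := by
    refine Set.subset_sdiff_singleton (h.sellr x x).osem_subset ?_
    rintro ⟨D, p, hp, hne⟩
    exact hne hp.2
  refine ((h.sellr x x).change_outputs hO).mono_inputs fun v => ?_
  simp only [Set.mem_union, Set.mem_symmDiff, Set.mem_sdiff, Set.mem_singleton_iff]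
  tauto

theorem sellr_self_of_notMem (h : IsSoundIO Q X Y) {x : V} (hx : x ∉ Y) :
    IsSoundIO (fun D => BRV.sellr x x (Q D)) X Y := by
  have hQ : (fun D => BRV.sellr x x (Q D)) = Q :=
    funext fun D => Set.sep_eq_self_iff_mem_true.2 fun _ hp => h.agreeOn_compl hp x hx
  rwa [hQ]

end IsSoundIO

namespace LIF

variable {Name V dom : Type*} {voc : Vocab Name}

theorem isSoundIO_idE : IsSoundIO (gsem dom (idE : LIF Name V voc)) ∅ ∅ :=
  ⟨osem_subset_iff.2 fun _ _ hp v _ => congrFun hp v,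
    fun _ _ _ ν₁' _ => ⟨ν₁', fun _ hv => hv.elim, rfl⟩⟩

theorem isSoundIO_atom (M : Name) (xs ys : List V) (hx : xs.length = voc.iar M)
    (hy : ys.length = voc.ar M - voc.iar M) :
    IsSoundIO (gsem dom (atom M xs ys hx hy)) {v | v ∈ xs} {v | v ∈ ys} := by
  refine ⟨osem_subset_iff.2 fun D p hp => hp.2, fun D p hp ν₁' hν₁ => ?_⟩
  have hys := agreeOn_patch ν₁' p.2 {v | v ∈ ys}
  refine ⟨patch ν₁' p.2 {v | v ∈ ys}, hys, ?_, (agreeOn_patch_compl ν₁' p.2 _).symm⟩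
  rw [List.map_congr_left hν₁, List.map_congr_left hys]
  exact hp.1

variable [DecidableEq V]

theorem isSoundIO_sellr {a : LIF Name V voc} (h : IsSoundIO (gsem dom a) a.Isyn a.Osyn) (x y : V) :
    IsSoundIO (gsem dom (sellr x y a)) (sellr x y a).Isyn (sellr x y a).Osyn := by
  change IsSoundIO (fun D => BRV.sellr x y (gsem dom a D)) _ _
  obtain rfl | hxy := eq_or_ne x y
  · by_cases hx : x ∈ a.Osyn
    · simpa [Isyn, Osyn, hx] using h.sellr_self x
    · simpa [Isyn, Osyn, hx] using h.sellr_self_of_notMem (x := x) (by simpa using hx)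
  · by_cases hy : y ∈ a.Osyn
    · have hyO : {y} \ (a.Osyn : Set V) = ∅ := by
        simpa [Set.sdiff_eq_empty] using hy
      simpa [Isyn, Osyn, hxy, hy, hyO] using h.sellr x y
    · have hyO : {y} \ (a.Osyn : Set V) = {y} := by simpa using hy
      simpa [Isyn, Osyn, hxy, hy, hyO, Set.insert_comm x y] using h.sellr x y

theorem isSoundIO_gsem (dom : Type*) (α : LIF Name V voc) :
    IsSoundIO (gsem dom α) α.Isyn α.Osyn := by
  induction α with
  | idE => simpa [Isyn, Osyn] using isSoundIO_idE
  | atom M xs ys hx hy => simpa [Isyn, Osyn] using isSoundIO_atom M xs ys hx hy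
  | union a b iha ihb =>
    push_cast [Isyn, Osyn]
    exact iha.union ihb
  | inter a b iha ihb =>
    push_cast [Isyn, Osyn]
    exact iha.inter ihb
  | diff a b iha ihb =>
    push_cast [Isyn, Osyn]
    exact iha.diff ihb
  | comp a b iha ihb =>
    push_cast [Isyn, Osyn]
    exact iha.comp ihb
  | cyll Z a ih =>
    push_cast [Isyn, Osyn]
    exact ih.cyll Z
  | cylr Z a ih =>
    push_cast [Isyn, Osyn]
    exact ih.cylr Z
  | sellr x y a ih => exact isSoundIO_sellr ih x y
  | sell x y a ih =>
    change IsSoundIO (fun D => BRV.sell x y (gsem dom a D)) _ _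
    obtain rfl | hxy := eq_or_ne x y
    · simpa [BRV.sell_self, Isyn, Osyn] using ih
    · simpa [Isyn, Osyn, hxy] using ih.sell x y
  | selr x y a ih =>
    change IsSoundIO (fun D => BRV.selr x y (gsem dom a D)) _ _
    obtain rfl | hxy := eq_or_ne x y
    · simpa [BRV.selr_self, Isyn, Osyn] using ih
    · simpa [Isyn, Osyn, hxy] using ih.selr x y

end LIF

theorem stmt7_general {Name V : Type*} {voc : Vocab Name} [DecidableEq V] (dom : Type*) :
    (∀ (M : Name) (xs ys : List V) (hx : xs.length = voc.iar M)
        (hy : ys.length = voc.ar M - voc.iar M),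
        (↑(LIF.Isyn (LIF.atom M xs ys hx hy)) : Set V) = {v | v ∈ xs} ∧
        (↑(LIF.Osyn (LIF.atom M xs ys hx hy)) : Set V) = {v | v ∈ ys}) ∧
    (∀ α : LIF Name V voc, Osem (LIF.gsem dom α) ⊆ ↑α.Osyn) ∧
    (∀ α : LIF Name V voc, Determines (LIF.gsem dom α) ↑α.Isyn ↑α.Osyn) :=
  ⟨fun _ xs ys _ _ => ⟨List.coe_toFinset xs, List.coe_toFinset ys⟩,
    fun α => (α.isSoundIO_gsem dom).osem_subset, fun α => (α.isSoundIO_gsem dom).determines⟩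

/-- Soundness Theorem: `(I^syn, O^syn)` is a sound input–output definition. -/
theorem stmt7 {Name V : Type*} [Nonempty Name] {voc : Vocab Name} [DecidableEq V]
    (dom : Type*) [Countable dom] [Infinite dom] :
    (∀ (M : Name) (xs ys : List V) (hx : xs.length = voc.iar M)
        (hy : ys.length = voc.ar M - voc.iar M),
        (↑(LIF.Isyn (LIF.atom M xs ys hx hy)) : Set V) = {v | v ∈ xs} ∧
        (↑(LIF.Osyn (LIF.atom M xs ys hx hy)) : Set V) = {v | v ∈ ys}) ∧
    (∀ α : LIF Name V voc, Osem (LIF.gsem dom α) ⊆ ↑α.Osyn) ∧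
    (∀ α : LIF Name V voc, Determines (LIF.gsem dom α) ↑α.Isyn ↑α.Osyn) :=
  stmt7_general dom
end
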